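/- Let n ≥ 1 and suppose (A,b) satisfies Setting B with constant δ ∈ (n/(n+π²),1]. Define γ := tr A/(|A|² + |b|²), Ã := γA, b̃ := γb, and κ := (δ − n/(n+π²))·(n+π²)/π². Then for every twice continuously differentiable ℤⁿ-periodic function φ : ℝⁿ → ℝ there holds ∫_Y Δφ·(Ã:D²φ + b̃·∇φ) ≥ (1 − √(1−κ)) ∫_Y (Δφ)², where D²φ is the Hessian, ∇φ the gradient and Δφ the Laplacian of φ. -/

import Mathlib

open MeasureTheory

noncomputable section

/-- The unit cell `Y = (0,1)^n`. -/
def unitCell (n : ℕ) : Set (Fin n → ℝ) := Set.univ.pi fun _ => Set.Ioo (0 : ℝ) 1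

/-- Frobenius norm squared of a matrix. -/
def frobSq {n : ℕ} (M : Matrix (Fin n) (Fin n) ℝ) : ℝ := ∑ i, ∑ j, (M i j) ^ 2

/-- Frobenius inner product of two matrices. -/
def frobInner {n : ℕ} (M N : Matrix (Fin n) (Fin n) ℝ) : ℝ := ∑ i, ∑ j, M i j * N i j

/-- Euclidean norm squared of a vector. -/
def euclSq {n : ℕ} (v : Fin n → ℝ) : ℝ := ∑ i, (v i) ^ 2

/-- Euclidean dot product. -/
def dotc {n : ℕ} (v w : Fin n → ℝ) : ℝ := ∑ i, v i * w i

/-- `ℤⁿ`-periodicity of a function on `ℝⁿ`. -/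
def IsPeriodic {n : ℕ} {α : Type*} (f : (Fin n → ℝ) → α) : Prop :=
  ∀ (x : Fin n → ℝ) (k : Fin n → ℤ), f (x + fun i => (k i : ℝ)) = f x

/-- Partial derivative in direction `i`. -/
def pd {n : ℕ} (f : (Fin n → ℝ) → ℝ) (i : Fin n) (x : Fin n → ℝ) : ℝ :=
  fderiv ℝ f x (Pi.single i 1)

/-- Gradient. -/
def grad {n : ℕ} (f : (Fin n → ℝ) → ℝ) (x : Fin n → ℝ) : Fin n → ℝ := fun i => pd f i x

/-- Hessian matrix. -/
def hess {n : ℕ} (f : (Fin n → ℝ) → ℝ) (x : Fin n → ℝ) : Matrix (Fin n) (Fin n) ℝ :=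
  Matrix.of fun i j => pd (pd f j) i x

/-- Laplacian. -/
def lap {n : ℕ} (f : (Fin n → ℝ) → ℝ) (x : Fin n → ℝ) : ℝ := ∑ i, pd (pd f i) i x

/-- Jacobian matrix of a vector field: `(jac w x) i j = ∂_j w_i (x)`. -/
def jac {n : ℕ} (w : (Fin n → ℝ) → Fin n → ℝ) (x : Fin n → ℝ) : Matrix (Fin n) (Fin n) ℝ :=
  Matrix.of fun i j => pd (fun y => w y i) j x

/-- Divergence of a vector field. -/
def divg {n : ℕ} (w : (Fin n → ℝ) → Fin n → ℝ) (x : Fin n → ℝ) : ℝ :=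
  ∑ i, pd (fun y => w y i) i x

/-- Setting B: symmetric-valued, measurable, `ℤⁿ`-periodic, essentially bounded coefficients,
uniform ellipticity, and the Cordes-type condition with constant `δ ∈ (n/(n+π²), 1]`. -/
structure SettingB {n : ℕ} (A : (Fin n → ℝ) → Matrix (Fin n) (Fin n) ℝ)
    (b : (Fin n → ℝ) → Fin n → ℝ) (lam Lam δ : ℝ) : Prop where
  symm : ∀ x, (A x).IsSymm
  measA : ∀ i j, Measurable fun x => A x i j
  measb : ∀ i, Measurable fun x => b x i
  perA : IsPeriodic A
  perb : IsPeriodic b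
  bddA : ∃ C : ℝ, ∀ᵐ x ∂(volume : Measure (Fin n → ℝ)), frobSq (A x) ≤ C
  bddb : ∃ C : ℝ, ∀ᵐ x ∂(volume : Measure (Fin n → ℝ)), euclSq (b x) ≤ C
  lam_pos : 0 < lam
  lam_le_Lam : lam ≤ Lam
  ellip : ∀ᵐ x ∂(volume : Measure (Fin n → ℝ)), ∀ ξ : Fin n → ℝ,
    lam * euclSq ξ ≤ dotc ξ (Matrix.mulVec (A x) ξ) ∧
      dotc ξ (Matrix.mulVec (A x) ξ) ≤ Lam * euclSq ξ
  delta_mem : δ ∈ Set.Ioc ((n : ℝ) / ((n : ℝ) + Real.pi ^ 2)) 1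
  cordes : ∀ᵐ x ∂(volume : Measure (Fin n → ℝ)),
    (frobSq (A x) + euclSq (b x)) / (Matrix.trace (A x)) ^ 2 ≤ 1 / ((n : ℝ) - 1 + δ)

/-- The renormalization function `γ = tr A / (|A|² + |b|²)`. -/
def gam {n : ℕ} (A : (Fin n → ℝ) → Matrix (Fin n) (Fin n) ℝ)
    (b : (Fin n → ℝ) → Fin n → ℝ) (x : Fin n → ℝ) : ℝ :=
  Matrix.trace (A x) / (frobSq (A x) + euclSq (b x))

/-- The constant `κ = (δ − n/(n+π²))·(n+π²)/π²`. -/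
def kappa (n : ℕ) (δ : ℝ) : ℝ :=
  (δ - (n : ℝ) / ((n : ℝ) + Real.pi ^ 2)) * (((n : ℝ) + Real.pi ^ 2) / Real.pi ^ 2)

/-- The invariant measure: measurable, `ℤⁿ`-periodic, square-integrable over `Y`,
with unit mass over `Y`, solving the stationary FPK equation in the very weak sense. -/
def IsInvariantMeasure {n : ℕ} (A : (Fin n → ℝ) → Matrix (Fin n) (Fin n) ℝ)
    (b : (Fin n → ℝ) → Fin n → ℝ) (r : (Fin n → ℝ) → ℝ) : Prop :=
  Measurable r ∧ IsPeriodic r ∧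
    IntegrableOn (fun x => (r x) ^ 2) (unitCell n) ∧
    (∫ x in unitCell n, r x) = 1 ∧
    ∀ φ : (Fin n → ℝ) → ℝ, ContDiff ℝ 2 φ → IsPeriodic φ →
      (∫ x in unitCell n,
        r x * (frobInner (A x) (hess φ x) + dotc (b x) (grad φ x))) = 0

/-- The bilinear form `B₂`. -/
def B2 {n : ℕ} (A : (Fin n → ℝ) → Matrix (Fin n) (Fin n) ℝ)
    (b : (Fin n → ℝ) → Fin n → ℝ) (v w : (Fin n → ℝ) → Fin n → ℝ) : ℝ :=
  (∫ x in unitCell n,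
    divg v x * (frobInner (gam A b x • A x) (jac w x) + dotc (gam A b x • b x) (w x)))
  + (1 / 2) * ∫ x in unitCell n,
      frobInner (jac v x - (jac v x).transpose) (jac w x - (jac w x).transpose)

lemma unitCell_ae_eq_Icc (n : ℕ) :
    unitCell n =ᵐ[volume] Set.Icc (0 : Fin n → ℝ) 1 :=
  Measure.univ_pi_Ioo_ae_eq_Icc

lemma unitCell_subset_Icc (n : ℕ) : unitCell n ⊆ Set.Icc (0 : Fin n → ℝ) 1 :=
  fun _ hx => ⟨fun i => (hx i trivial).1.le, fun i => (hx i trivial).2.le⟩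

lemma measurableSet_unitCell (n : ℕ) : MeasurableSet (unitCell n) :=
  MeasurableSet.univ_pi fun _ => measurableSet_Ioo

instance isFiniteMeasure_restrict_unitCell (n : ℕ) :
    IsFiniteMeasure ((volume : Measure (Fin n → ℝ)).restrict (unitCell n)) := by
  constructor
  rw [Measure.restrict_apply_univ]
  exact (measure_mono (unitCell_subset_Icc n)).trans_lt isCompact_Icc.measure_lt_top

lemma Continuous.integrableOn_unitCell {n : ℕ} {f : (Fin n → ℝ) → ℝ} (hf : Continuous f) :
    IntegrableOn f (unitCell n) :=
  (hf.continuousOn.integrableOn_compact isCompact_Icc).mono_set (unitCell_subset_Icc n)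

/-- The integral of a periodic function over the unit cell is translation invariant. -/
lemma IsPeriodic.setIntegral_unitCell_add {n : ℕ} {f : (Fin n → ℝ) → ℝ} (hf : IsPeriodic f)
    (v : Fin n → ℝ) : ∫ x in unitCell n, f (x + v) = ∫ x in unitCell n, f x := by
  set D := ZSpan.fundamentalDomain (Pi.basisFun ℝ (Fin n)) with hD
  have hDae : unitCell n =ᵐ[volume] D := by
    rw [hD, ZSpan.fundamentalDomain_pi_basisFun]
    exact (unitCell_ae_eq_Icc n).trans Measure.univ_pi_Ico_ae_eq_Icc.symm
  have hfund := ZSpan.isAddFundamentalDomain' (Pi.basisFun ℝ (Fin n)) (volume : Measure (Fin n → ℝ))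
  have hinv : ∀ (g : (Submodule.span ℤ (Set.range (Pi.basisFun ℝ (Fin n)))).toAddSubgroup) (x : Fin n → ℝ),
      f (g +ᵥ x) = f x := by
    rintro ⟨g, hg⟩ x
    obtain ⟨k, hk⟩ := Classical.axiomOfChoice
      (((Pi.basisFun ℝ (Fin n)).mem_span_iff_repr_mem ℤ g).1 hg)
    have : (⟨g, hg⟩ : (Submodule.span ℤ
        (Set.range (Pi.basisFun ℝ (Fin n)))).toAddSubgroup) +ᵥ x = x + fun i => (k i : ℝ) := by
      ext i
      have := hk i
      simp only [algebraMap_int_eq, eq_intCast, Pi.basisFun_repr] at this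
      simp [AddSubgroup.vadd_def, this, add_comm]
    rw [this, hf]
  have : Countable (Submodule.span ℤ (Set.range (Pi.basisFun ℝ (Fin n)))).toAddSubgroup :=
    inferInstanceAs (Countable (Submodule.span ℤ (Set.range (Pi.basisFun ℝ (Fin n)))))
  have key := (hfund.vadd_of_comm v).setIntegral_eq hfund hinv
  rw [setIntegral_congr_set hDae, setIntegral_congr_set hDae, ← key, ← Set.image_vadd,
    (measurePreserving_vadd v (volume : Measure (Fin n → ℝ))).setIntegral_image_emb
      (measurableEmbedding_const_vadd v)]
  simp [add_comm, hD]

lemma hasDerivAt_line {n : ℕ} {u : (Fin n → ℝ) → ℝ} (hu : ContDiff ℝ 1 u) (i : Fin n)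
    (x : Fin n → ℝ) (t : ℝ) :
    HasDerivAt (fun s : ℝ => u (x + s • Pi.single i 1)) (pd u i (x + t • Pi.single i 1)) t := by
  have h1 : HasDerivAt (fun s : ℝ => x + s • (Pi.single i 1 : Fin n → ℝ)) (Pi.single i 1) t := by
    simpa using ((hasDerivAt_id t).smul_const (Pi.single i 1 : Fin n → ℝ)).const_add x
  exact ((hu.differentiable one_ne_zero _).hasFDerivAt).comp_hasDerivAt t h1

lemma ContDiff.continuous_pd {n : ℕ} {u : (Fin n → ℝ) → ℝ} (hu : ContDiff ℝ 1 u) (i : Fin n) :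
    Continuous (pd u i) :=
  (hu.continuous_fderiv one_ne_zero).clm_apply continuous_const

lemma ContDiff.contDiff_pd {n : ℕ} {u : (Fin n → ℝ) → ℝ} (hu : ContDiff ℝ 2 u) (i : Fin n) :
    ContDiff ℝ 1 (pd u i) :=
  (hu.fderiv_right (m := 1) (by norm_num)).clm_apply contDiff_const

lemma IsPeriodic.pd {n : ℕ} {u : (Fin n → ℝ) → ℝ} (hu : IsPeriodic u) (i : Fin n) :
    IsPeriodic (pd u i) := by
  intro x k
  have : (fun y => u (y + fun i => (k i : ℝ))) = u := funext fun y => hu y k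
  simp only [_root_.pd]
  rw [← fderiv_comp_add_right, this]

lemma IsPeriodic.mul {n : ℕ} {u v : (Fin n → ℝ) → ℝ} (hu : IsPeriodic u) (hv : IsPeriodic v) :
    IsPeriodic fun x => u x * v x := fun x k => by simp only [hu x k, hv x k]

lemma pd_comm {n : ℕ} {u : (Fin n → ℝ) → ℝ} (hu : ContDiff ℝ 2 u) (i j : Fin n)
    (x : Fin n → ℝ) : pd (pd u i) j x = pd (pd u j) i x := by
  have h : ∀ i j, pd (pd u i) j x = fderiv ℝ (fderiv ℝ u) x (Pi.single j 1) (Pi.single i 1) := by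
    intro i j
    have hd : DifferentiableAt ℝ (fderiv ℝ u) x :=
      (hu.fderiv_right (m := 1) (by norm_num)).differentiable one_ne_zero x
    change fderiv ℝ (fun y => fderiv ℝ u y (Pi.single i 1)) x (Pi.single j 1) = _
    rw [fderiv_clm_apply hd (differentiableAt_const _)]
    simp
  rw [h, h]
  exact (hu.contDiffAt.isSymmSndFDerivAt (by simp)) _ _

/-- Differentiation under the integral over the unit cell along a coordinate direction. -/
lemma hasDerivAt_setIntegral_line {n : ℕ} {u w : (Fin n → ℝ) → ℝ} (hu : ContDiff ℝ 1 u)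
    (hw : Continuous w) (i : Fin n) (c : ℝ) :
    HasDerivAt (fun t : ℝ => ∫ x in unitCell n, u (x + (c * t) • Pi.single i 1) * w x)
      (c * ∫ x in unitCell n, pd u i x * w x) 0 := by
  set e : Fin n → ℝ := Pi.single i 1
  have hF : Continuous fun p : ℝ × (Fin n → ℝ) => c * pd u i (p.2 + (c * p.1) • e) * w p.2 := by
    have := hu.continuous_pd i
    fun_prop
  obtain ⟨C, hC⟩ := ((isCompact_closedBall (0 : ℝ) 1).prod
    (isCompact_Icc (a := (0 : Fin n → ℝ)) (b := 1))).exists_bound_of_continuousOn hF.continuousOn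
  have key := (hasDerivAt_integral_of_dominated_loc_of_deriv_le
    (μ := (volume : Measure (Fin n → ℝ)).restrict (unitCell n))
    (F := fun (t : ℝ) x => u (x + (c * t) • e) * w x)
    (F' := fun (t : ℝ) x => c * pd u i (x + (c * t) • e) * w x) (x₀ := 0)
    (bound := fun _ => C) (Metric.closedBall_mem_nhds (0 : ℝ) one_pos) ?_ ?_ ?_ ?_ ?_ ?_).2
  · simpa only [mul_zero, zero_smul, add_zero, mul_assoc, integral_const_mul] using key
  · refine Filter.Eventually.of_forall fun t => ?_
    have := hu.continuous
    exact (by fun_prop : Continuous fun x => u (x + (c * t) • e) * w x).aestronglyMeasurable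
  · have := hu.continuous
    exact (by fun_prop : Continuous fun x =>
      u (x + (c * 0) • e) * w x).integrableOn_unitCell
  · exact (hF.comp (by fun_prop : Continuous fun x : Fin n → ℝ =>
      ((0 : ℝ), x))).aestronglyMeasurable
  · refine (ae_restrict_iff' (measurableSet_unitCell n)).2 (Filter.Eventually.of_forall ?_)
    exact fun x hx t ht => hC (t, x) ⟨ht, unitCell_subset_Icc n hx⟩
  · exact integrable_const C
  · refine Filter.Eventually.of_forall fun x t _ => ?_
    have h := (hasDerivAt_line hu i x (c * t)).scomp t ((hasDerivAt_id t).const_mul c)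
    simpa [Function.comp_def] using h.mul_const (w x)

/-- The integral of a partial derivative of a periodic function over the unit cell vanishes. -/
lemma IsPeriodic.setIntegral_pd_eq_zero {n : ℕ} {u : (Fin n → ℝ) → ℝ} (hp : IsPeriodic u)
    (hu : ContDiff ℝ 1 u) (i : Fin n) : ∫ x in unitCell n, _root_.pd u i x = 0 := by
  have h := hasDerivAt_setIntegral_line hu (w := fun _ => 1) continuous_const i 1
  simp only [mul_one, hp.setIntegral_unitCell_add, one_mul] at h
  exact h.unique (hasDerivAt_const _ _)

lemma IsPeriodic.setIntegral_pd_mul {n : ℕ} {u v : (Fin n → ℝ) → ℝ} (hup : IsPeriodic u)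
    (hvp : IsPeriodic v) (hu : ContDiff ℝ 1 u) (hv : ContDiff ℝ 1 v) (i : Fin n) :
    ∫ x in unitCell n, _root_.pd u i x * v x = -∫ x in unitCell n, u x * _root_.pd v i x := by
  have h := (hup.mul hvp).setIntegral_pd_eq_zero (hu.mul hv) i
  have e : ∀ x, _root_.pd (fun y => u y * v y) i x =
      _root_.pd u i x * v x + u x * _root_.pd v i x := by
    intro x
    simp only [_root_.pd]
    rw [fderiv_fun_mul (hu.differentiable one_ne_zero x) (hv.differentiable one_ne_zero x)]
    simp
    ring
  have := hu.continuous
  have := hv.continuous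
  have := hu.continuous_pd i
  have := hv.continuous_pd i
  simp only [e] at h
  rw [integral_add (by fun_prop : Continuous fun x =>
      _root_.pd u i x * v x).integrableOn_unitCell (by fun_prop : Continuous fun x =>
      u x * _root_.pd v i x).integrableOn_unitCell] at h
  linarith

lemma ContDiff.comp_add_const {n : ℕ} {u : (Fin n → ℝ) → ℝ} (hu : ContDiff ℝ 1 u)
    (a : Fin n → ℝ) : ContDiff ℝ 1 fun x => u (x + a) :=
  hu.comp (contDiff_id.add contDiff_const)

lemma IsPeriodic.comp_add_const {n : ℕ} {u : (Fin n → ℝ) → ℝ} (hu : IsPeriodic u)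
    (a : Fin n → ℝ) : IsPeriodic fun x => u (x + a) := fun x k => by
  simp only
  rw [add_right_comm, hu]

/-- Two partial derivatives may be exchanged between periodic `C¹` functions under the integral. -/
lemma setIntegral_pd_mul_pd_comm {n : ℕ} {u v : (Fin n → ℝ) → ℝ} (hup : IsPeriodic u)
    (hvp : IsPeriodic v) (hu : ContDiff ℝ 1 u) (hv : ContDiff ℝ 1 v) (i j : Fin n) :
    ∫ x in unitCell n, pd u i x * pd v j x = ∫ x in unitCell n, pd u j x * pd v i x := by
  have h1 := hasDerivAt_setIntegral_line hu (hv.continuous_pd j) i 1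
  have h2 := (hasDerivAt_setIntegral_line hv (hu.continuous_pd j) i (-1)).neg
  have e : ∀ t : ℝ, ∫ x in unitCell n, u (x + (1 * t) • Pi.single i 1) * pd v j x =
      -∫ x in unitCell n, v (x + (-1 * t) • Pi.single i 1) * pd u j x := by
    intro t
    set a : Fin n → ℝ := t • Pi.single i 1 with ha
    have hs : ∀ x, pd (fun y => u (y + a)) j x = pd u j (x + a) := fun x => by
      simp only [pd, fderiv_comp_add_right]
    have h3 := (hup.comp_add_const a).setIntegral_pd_mul hvp (hu.comp_add_const a) hv j
    have h4 := ((hvp.comp_add_const (-a)).mul (hup.pd j)).setIntegral_unitCell_add a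
    simp only [hs] at h3
    simp only [add_neg_cancel_right] at h4
    simp only [one_mul, neg_mul, neg_smul, ← ha, ← h4]
    rw [eq_neg_of_add_eq_zero_left (a := ∫ x in unitCell n, u (x + a) * pd v j x)
      (b := ∫ x in unitCell n, pd u j (x + a) * v x) (by rw [h3]; ring)]
    simp only [mul_comm]
  simp only [e] at h1
  have := h1.unique h2
  simp only [one_mul, neg_mul, neg_neg] at this
  rw [this]
  simp only [mul_comm]

/-- A one-dimensional Poincaré estimate for functions of zero mean over a period. -/
lemma sq_le_integral_sq_of_periodic {g q : ℝ → ℝ} (hg : ∀ t, HasDerivAt g (q t) t)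
    (hq : Continuous q) (h1 : g 1 = g 0) (h0 : ∫ t in (0 : ℝ)..1, g t = 0) :
    (g 0) ^ 2 ≤ 1 / 12 * ∫ t in (0 : ℝ)..1, (q t) ^ 2 := by
  have hrep : ∫ t in (0 : ℝ)..1, (t - 1 / 2) * q t = g 0 := by
    rw [intervalIntegral.integral_mul_deriv_eq_deriv_mul (u := fun t => t - 1 / 2)
      (u' := fun _ => 1) (v := g) (fun t _ => (hasDerivAt_id t).sub_const _) (fun t _ => hg t)
      intervalIntegrable_const (hq.intervalIntegrable _ _)]
    simp only [one_mul, h0, h1]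
    ring
  have hmono : ∫ t in (0 : ℝ)..1, (24 * g 0 * ((t - 1 / 2) * q t)
      - 144 * g 0 ^ 2 * (t - 1 / 2) ^ 2) ≤ ∫ t in (0 : ℝ)..1, (q t) ^ 2 := by
    refine intervalIntegral.integral_mono_on zero_le_one ?_ ?_ ?_
    · exact (by fun_prop : Continuous fun t => 24 * g 0 * ((t - 1 / 2) * q t)
        - 144 * g 0 ^ 2 * (t - 1 / 2) ^ 2).intervalIntegrable _ _
    · exact (hq.pow 2).intervalIntegrable _ _
    · intro t _
      nlinarith [sq_nonneg (q t - 12 * g 0 * (t - 1 / 2))]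
  have hsq : ∫ t in (0 : ℝ)..1, (t - 1 / 2) ^ 2 = 1 / 12 := by
    rw [intervalIntegral.integral_comp_sub_right (fun t => t ^ 2)]
    norm_num [integral_pow]
  rw [intervalIntegral.integral_sub
    ((by fun_prop : Continuous fun t => 24 * g 0 * ((t - 1 / 2) * q t)).intervalIntegrable _ _)
    ((by fun_prop : Continuous fun t : ℝ =>
      144 * g 0 ^ 2 * (t - 1 / 2) ^ 2).intervalIntegrable _ _),
    intervalIntegral.integral_const_mul, intervalIntegral.integral_const_mul, hrep, hsq] at hmono
  linarith

/-- Periodic Poincaré inequality in one coordinate direction. -/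
lemma setIntegral_sq_pd_le {n : ℕ} {φ : (Fin n → ℝ) → ℝ} (hφ : ContDiff ℝ 2 φ)
    (hp : IsPeriodic φ) (i : Fin n) :
    ∫ x in unitCell n, (pd φ i x) ^ 2 ≤ 1 / 12 * ∫ x in unitCell n, (pd (pd φ i) i x) ^ 2 := by
  set e : Fin n → ℝ := Pi.single i 1 with he
  set q := pd (pd φ i) i with hq
  have hφ1 : ContDiff ℝ 1 φ := hφ.of_le (by norm_num)
  have hgc := hφ.contDiff_pd i
  have hg := hφ1.continuous_pd i
  have hqc : Continuous q := hgc.continuous_pd i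
  have hper : ∀ {f : (Fin n → ℝ) → ℝ}, IsPeriodic f → ∀ x, f (x + e) = f x := by
    intro f hf x
    convert hf x (Pi.single i 1) using 3
    ext j
    simp [he, Pi.single_apply]
  have hpt : ∀ x, (pd φ i x) ^ 2 ≤ 1 / 12 * ∫ t in (0 : ℝ)..1, (q (x + t • e)) ^ 2 := by
    intro x
    have h0 : ∫ t in (0 : ℝ)..1, pd φ i (x + t • e) = 0 := by
      rw [intervalIntegral.integral_eq_sub_of_hasDerivAt (fun t _ => hasDerivAt_line hφ1 i x t)
        ((by fun_prop : Continuous fun t : ℝ => pd φ i (x + t • e)).intervalIntegrable _ _)]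
      simp [← he, hper hp]
    simpa using sq_le_integral_sq_of_periodic (g := fun t => pd φ i (x + t • e))
      (q := fun t => q (x + t • e)) (hasDerivAt_line hgc i x) (by fun_prop)
      (by simp [hper (hp.pd i)]) h0
  have hcont : Continuous fun p : (Fin n → ℝ) × ℝ => (q (p.1 + p.2 • e)) ^ 2 := by fun_prop
  have hint : Integrable (Function.uncurry fun x (t : ℝ) => (q (x + t • e)) ^ 2)
      (((volume : Measure (Fin n → ℝ)).restrict (unitCell n)).prod
        ((volume : Measure ℝ).restrict (Set.Ioc 0 1))) := by
    rw [Measure.prod_restrict]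
    exact (hcont.continuousOn.integrableOn_compact (isCompact_Icc.prod isCompact_Icc)).mono_set
      (Set.prod_mono (unitCell_subset_Icc n) Set.Ioc_subset_Icc_self)
  have hswap := integral_integral_swap hint
  have hcol : ∀ t : ℝ, ∫ x in unitCell n, (q (x + t • e)) ^ 2 = ∫ x in unitCell n, (q x) ^ 2 := by
    intro t
    have hq2 : IsPeriodic fun x => (q x) ^ 2 := fun x k => by simp only [((hp.pd i).pd i) x k, hq]
    exact hq2.setIntegral_unitCell_add (t • e)
  simp only [hcol] at hswap
  calc ∫ x in unitCell n, (pd φ i x) ^ 2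
      ≤ ∫ x in unitCell n, 1 / 12 * ∫ t in Set.Ioc (0 : ℝ) 1, (q (x + t • e)) ^ 2 := by
        refine integral_mono (hg.pow 2).integrableOn_unitCell (hint.integral_prod_left.const_mul _)
          fun x => ?_
        simpa only [intervalIntegral.integral_of_le zero_le_one] using hpt x
    _ = 1 / 12 * ∫ x in unitCell n, (q x) ^ 2 := by
        rw [integral_const_mul, hswap]
        simp

lemma ContDiff.continuous_pd_pd {n : ℕ} {φ : (Fin n → ℝ) → ℝ} (hφ : ContDiff ℝ 2 φ)
    (i j : Fin n) : Continuous (pd (pd φ i) j) :=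
  (hφ.contDiff_pd i).continuous_pd j

lemma setIntegral_lap_sq {n : ℕ} {φ : (Fin n → ℝ) → ℝ} (hφ : ContDiff ℝ 2 φ)
    (hp : IsPeriodic φ) :
    ∫ x in unitCell n, (lap φ x) ^ 2 = ∫ x in unitCell n, frobSq (hess φ x) := by
  have hc := hφ.continuous_pd_pd
  simp only [lap, frobSq, hess, Matrix.of_apply, sq, Finset.sum_mul_sum]
  rw [integral_finsetSum _ fun i _ => (by fun_prop : Continuous _).integrableOn_unitCell,
    integral_finsetSum _ fun i _ => (by fun_prop : Continuous _).integrableOn_unitCell]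
  refine Finset.sum_congr rfl fun i _ => ?_
  rw [integral_finsetSum _ fun i _ => (by fun_prop : Continuous _).integrableOn_unitCell,
    integral_finsetSum _ fun i _ => (by fun_prop : Continuous _).integrableOn_unitCell]
  refine Finset.sum_congr rfl fun j _ => ?_
  rw [setIntegral_pd_mul_pd_comm (hp.pd i) (hp.pd j) (hφ.contDiff_pd i) (hφ.contDiff_pd j)]
  simp only [pd_comm hφ i j]

lemma setIntegral_euclSq_grad_le {n : ℕ} {φ : (Fin n → ℝ) → ℝ} (hφ : ContDiff ℝ 2 φ)
    (hp : IsPeriodic φ) :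
    ∫ x in unitCell n, euclSq (grad φ x) ≤ 1 / 12 * ∫ x in unitCell n, frobSq (hess φ x) := by
  have hc := hφ.continuous_pd_pd
  have hc1 := (hφ.of_le (by norm_num) : ContDiff ℝ 1 φ).continuous_pd
  simp only [euclSq, grad, frobSq, hess, Matrix.of_apply]
  rw [integral_finsetSum _ fun i _ => (by fun_prop : Continuous _).integrableOn_unitCell,
    integral_finsetSum _ fun i _ => (by fun_prop : Continuous _).integrableOn_unitCell,
    Finset.mul_sum]
  refine Finset.sum_le_sum fun i _ => (setIntegral_sq_pd_le hφ hp i).trans ?_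
  refine mul_le_mul_of_nonneg_left (integral_mono
    (by fun_prop : Continuous _).integrableOn_unitCell
    (by fun_prop : Continuous _).integrableOn_unitCell fun x => ?_) (by norm_num)
  exact Finset.single_le_sum (f := fun j => (pd (pd φ j) i x) ^ 2) (fun j _ => sq_nonneg _)
    (Finset.mem_univ i)

lemma sq_frobInner_add_dotc_le {n : ℕ} (M H : Matrix (Fin n) (Fin n) ℝ) (v w : Fin n → ℝ) :
    (frobInner M H + dotc v w) ^ 2 ≤ (frobSq M + euclSq v) * (frobSq H + euclSq w) := by
  have h := Finset.sum_mul_sq_le_sq_mul_sq (Finset.univ : Finset ((Fin n × Fin n) ⊕ Fin n))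
    (Sum.elim (fun p => M p.1 p.2) v) (Sum.elim (fun p => H p.1 p.2) w)
  simpa [Fintype.sum_sum_type, Fintype.sum_prod_type, frobInner, dotc, frobSq, euclSq] using h

lemma frobInner_sub_one {n : ℕ} (M H : Matrix (Fin n) (Fin n) ℝ) :
    frobInner (M - 1) H = frobInner M H - H.trace := by
  simp [frobInner, Matrix.trace, sub_mul, Finset.sum_sub_distrib, Matrix.one_apply]

lemma frobSq_smul_sub_one {n : ℕ} (c : ℝ) (M : Matrix (Fin n) (Fin n) ℝ) :
    frobSq (c • M - 1) = c ^ 2 * frobSq M - 2 * c * M.trace + n := by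
  have h : ∀ i j, (c • M - 1) i j ^ 2 = c ^ 2 * M i j ^ 2
      - 2 * c * (if i = j then M i j else 0) + if i = j then 1 else 0 := by
    intro i j
    by_cases hij : i = j
    · simp [hij]; ring
    · simp [hij]; ring
  simp only [frobSq, h]
  simp [Finset.sum_add_distrib, Finset.sum_sub_distrib, ← Finset.mul_sum, Matrix.trace]

lemma euclSq_smul {n : ℕ} (c : ℝ) (v : Fin n → ℝ) : euclSq (c • v) = c ^ 2 * euclSq v := by
  simp [euclSq, mul_pow, Finset.mul_sum]

/-- The renormalized coefficients are close to the identity under the Cordes condition. -/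
lemma frobSq_sub_one_add_euclSq_le {n : ℕ} {M : Matrix (Fin n) (Fin n) ℝ} {v : Fin n → ℝ} {δ : ℝ}
    (hδ : 0 < (n : ℝ) - 1 + δ) (htr : 0 < M.trace) (hF : 0 < frobSq M + euclSq v)
    (hc : (frobSq M + euclSq v) / M.trace ^ 2 ≤ 1 / ((n : ℝ) - 1 + δ)) :
    frobSq ((M.trace / (frobSq M + euclSq v)) • M - 1)
      + euclSq ((M.trace / (frobSq M + euclSq v)) • v) ≤ 1 - δ := by
  rw [frobSq_smul_sub_one, euclSq_smul]
  set F := frobSq M + euclSq v with hFdef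
  have h1 : (n : ℝ) - 1 + δ ≤ M.trace ^ 2 / F := by
    rw [div_le_div_iff₀ (by positivity) hδ] at hc
    rw [le_div_iff₀ hF]
    linarith
  have h2 : (M.trace / F) ^ 2 * frobSq M - 2 * (M.trace / F) * M.trace + n
      + (M.trace / F) ^ 2 * euclSq v = n - M.trace ^ 2 / F := by
    rw [show frobSq M = F - euclSq v by rw [hFdef]; ring]
    field_simp
    ring
  linarith

lemma SettingB.diag_pos {n : ℕ} {A : (Fin n → ℝ) → Matrix (Fin n) (Fin n) ℝ}
    {b : (Fin n → ℝ) → Fin n → ℝ} {lam Lam δ : ℝ} (hAB : SettingB A b lam Lam δ) :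
    ∀ᵐ x ∂(volume : Measure (Fin n → ℝ)), ∀ i, 0 < A x i i := by
  filter_upwards [hAB.ellip] with x hx i
  have h := (hx (Pi.single i 1)).1
  have e1 : euclSq (Pi.single i 1 : Fin n → ℝ) = 1 := by
    simp [euclSq, Pi.single_apply]
  have e2 : dotc (Pi.single i 1) ((A x).mulVec (Pi.single i 1)) = A x i i := by
    simp [dotc, Pi.single_apply]
  rw [e1, e2, mul_one] at h
  exact hAB.lam_pos.trans_le h

lemma SettingB.delta_pos {n : ℕ} {A : (Fin n → ℝ) → Matrix (Fin n) (Fin n) ℝ}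
    {b : (Fin n → ℝ) → Fin n → ℝ} {lam Lam δ : ℝ} (hAB : SettingB A b lam Lam δ) : 0 < δ :=
  lt_of_le_of_lt (by positivity) hAB.delta_mem.1

lemma SettingB.sq_sub_lap_le {n : ℕ} (hn : 1 ≤ n) {A : (Fin n → ℝ) → Matrix (Fin n) (Fin n) ℝ}
    {b : (Fin n → ℝ) → Fin n → ℝ} {lam Lam δ : ℝ} (hAB : SettingB A b lam Lam δ)
    (φ : (Fin n → ℝ) → ℝ) :
    ∀ᵐ x ∂(volume : Measure (Fin n → ℝ)),
      (frobInner (gam A b x • A x) (hess φ x) + dotc (gam A b x • b x) (grad φ x) - lap φ x) ^ 2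
        ≤ (1 - δ) * (frobSq (hess φ x) + euclSq (grad φ x)) := by
  filter_upwards [hAB.diag_pos, hAB.cordes] with x hx hc
  have hn' : (1 : ℝ) ≤ n := by exact_mod_cast hn
  let i₀ : Fin n := ⟨0, hn⟩
  have htr : 0 < (A x).trace := Finset.sum_pos (fun i _ => hx i) ⟨i₀, Finset.mem_univ _⟩
  have hb : 0 ≤ euclSq (b x) := Finset.sum_nonneg fun i _ => sq_nonneg _
  have hA : 0 < frobSq (A x) := by
    refine Finset.sum_pos (fun i _ => ?_) ⟨i₀, Finset.mem_univ _⟩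
    exact Finset.sum_pos' (fun j _ => sq_nonneg _) ⟨i, Finset.mem_univ _, pow_pos (hx i) 2⟩
  have h := frobSq_sub_one_add_euclSq_le (by linarith [hAB.delta_pos]) htr
    (by linarith) hc
  have hW : 0 ≤ frobSq (hess φ x) + euclSq (grad φ x) :=
    add_nonneg (Finset.sum_nonneg fun i _ => Finset.sum_nonneg fun j _ => sq_nonneg _)
      (Finset.sum_nonneg fun i _ => sq_nonneg _)
  have hcs := sq_frobInner_add_dotc_le (gam A b x • A x - 1) (hess φ x) (gam A b x • b x)
    (grad φ x)
  rw [frobInner_sub_one] at hcs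
  have hl : lap φ x = (hess φ x).trace := rfl
  rw [hl, add_sub_right_comm]
  exact hcs.trans (mul_le_mul_of_nonneg_right h hW)

lemma abs_mul_le_of_sq_le {a d s w : ℝ} (hs : 0 ≤ s) (hw : 0 ≤ w) (h : d ^ 2 ≤ s ^ 2 * w) :
    |a * d| ≤ s / 2 * (a ^ 2 + w) := by
  have h1 : |d| ≤ s * √w := by
    rw [← Real.sqrt_sq hs, ← Real.sqrt_mul (sq_nonneg s)]
    exact Real.abs_le_sqrt h
  rw [abs_mul]
  have h2 := mul_le_mul_of_nonneg_left h1 (abs_nonneg a)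
  have h3 := mul_nonneg hs (sq_nonneg (|a| - √w))
  nlinarith [Real.sq_sqrt hw, sq_abs a]

lemma one_sub_kappa {n : ℕ} (δ : ℝ) :
    1 - kappa n δ = (1 - δ) * (1 + n / Real.pi ^ 2) := by
  have := Real.pi_pos
  have : (n : ℝ) + Real.pi ^ 2 ≠ 0 := by positivity
  unfold kappa
  field_simp
  ring

/-- In Setting B, for every `C²` periodic function `φ` there holds
`∫_Y Δφ·(Ã:D²φ + b̃·∇φ) ≥ (1 − √(1−κ)) ∫_Y (Δφ)²`. -/
theorem stmt_7 {n : ℕ} (hn : 1 ≤ n)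
    (A : (Fin n → ℝ) → Matrix (Fin n) (Fin n) ℝ) (b : (Fin n → ℝ) → Fin n → ℝ)
    (lam Lam δ : ℝ) (hAB : SettingB A b lam Lam δ) :
    ∀ φ : (Fin n → ℝ) → ℝ, ContDiff ℝ 2 φ → IsPeriodic φ →
      (∫ x in unitCell n,
        lap φ x * (frobInner (gam A b x • A x) (hess φ x)
          + dotc (gam A b x • b x) (grad φ x)))
        ≥ (1 - Real.sqrt (1 - kappa n δ)) * ∫ x in unitCell n, (lap φ x) ^ 2 := by
  intro φ hφ hp
  have hn' : (1 : ℝ) ≤ n := by exact_mod_cast hn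
  have hpi := Real.pi_pos
  set c : ℝ := 1 + n / Real.pi ^ 2 with hc
  have hc0 : 0 < c := by positivity
  have hδ : 0 ≤ 1 - δ := by linarith [hAB.delta_mem.2]
  set s := Real.sqrt (1 - kappa n δ) with hs
  have hs0 : 0 ≤ s := Real.sqrt_nonneg _
  have hs2 : s ^ 2 = (1 - δ) * c := by
    rw [hs, one_sub_kappa, Real.sq_sqrt (mul_nonneg hδ hc0.le)]
  set W : (Fin n → ℝ) → ℝ := fun x => frobSq (hess φ x) + euclSq (grad φ x) with hW
  have hW0 : ∀ x, 0 ≤ W x := fun x =>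
    add_nonneg (Finset.sum_nonneg fun i _ => Finset.sum_nonneg fun j _ => sq_nonneg _)
      (Finset.sum_nonneg fun i _ => sq_nonneg _)
  have hc2 := hφ.continuous_pd_pd
  have hc1 := (hφ.of_le (by norm_num) : ContDiff ℝ 1 φ).continuous_pd
  have hlapc : Continuous (lap φ) := by unfold lap; fun_prop
  have hHc : Continuous fun x => frobSq (hess φ x) := by
    simp only [frobSq, hess, Matrix.of_apply]; fun_prop
  have hGc : Continuous fun x => euclSq (grad φ x) := by
    simp only [euclSq, grad]; fun_prop
  have hWc : Continuous W := hHc.add hGc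
  set T : (Fin n → ℝ) → ℝ := fun x =>
    frobInner (gam A b x • A x) (hess φ x) + dotc (gam A b x • b x) (grad φ x) with hT
  have hTm : Measurable T := by
    have hA := hAB.measA
    have hb := hAB.measb
    have h2 : ∀ i j, Measurable (pd (pd φ i) j) := fun i j => (hc2 i j).measurable
    have h1 : ∀ i, Measurable (pd φ i) := fun i => (hc1 i).measurable
    have hg : Measurable fun x => gam A b x := by
      simp only [gam, Matrix.trace, frobSq, euclSq, Matrix.diag_apply]
      fun_prop
    simp only [hT, frobInner, dotc, hess, grad, Matrix.smul_apply, Pi.smul_apply, smul_eq_mul,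
      Matrix.of_apply]
    fun_prop
  have hpt : ∀ᵐ x ∂(volume : Measure (Fin n → ℝ)).restrict (unitCell n),
      |lap φ x * (T x - lap φ x)| ≤ s / 2 * (lap φ x ^ 2 + W x / c) := by
    filter_upwards [ae_restrict_of_ae (hAB.sq_sub_lap_le hn φ)] with x hx
    refine abs_mul_le_of_sq_le hs0 (div_nonneg (hW0 x) hc0.le) ?_
    rw [hs2, show (1 - δ) * c * (W x / c) = (1 - δ) * W x by field_simp]
    exact hx
  have hbi : IntegrableOn (fun x => s / 2 * (lap φ x ^ 2 + W x / c)) (unitCell n) :=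
    (by fun_prop : Continuous _).integrableOn_unitCell
  have hRi : IntegrableOn (fun x => lap φ x * (T x - lap φ x)) (unitCell n) :=
    Integrable.mono' hbi
      (hlapc.measurable.mul (hTm.sub hlapc.measurable)).aestronglyMeasurable hpt
  have hR : -∫ x in unitCell n, s / 2 * (lap φ x ^ 2 + W x / c) ≤
      ∫ x in unitCell n, lap φ x * (T x - lap φ x) := by
    rw [← integral_neg]
    exact integral_mono_ae hbi.neg hRi (hpt.mono fun x hx => (abs_le.1 hx).1)
  have hL2i : IntegrableOn (fun x => lap φ x ^ 2) (unitCell n) :=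
    (hlapc.pow 2).integrableOn_unitCell
  have hsplit : ∫ x in unitCell n, lap φ x * T x =
      (∫ x in unitCell n, lap φ x ^ 2) + ∫ x in unitCell n, lap φ x * (T x - lap φ x) := by
    rw [← integral_add hL2i hRi]
    congr with x
    ring
  have hbound : ∫ x in unitCell n, s / 2 * (lap φ x ^ 2 + W x / c) =
      s / 2 * ((∫ x in unitCell n, lap φ x ^ 2) + (∫ x in unitCell n, W x) / c) := by
    rw [integral_const_mul, integral_add hL2i (hWc.div_const c).integrableOn_unitCell,
      integral_div]
  have hWle : (∫ x in unitCell n, W x) / c ≤ ∫ x in unitCell n, lap φ x ^ 2 := by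
    have hL0 : 0 ≤ ∫ x in unitCell n, lap φ x ^ 2 := integral_nonneg fun x => sq_nonneg _
    have hG := setIntegral_euclSq_grad_le hφ hp
    have hc12 : 1 + 1 / 12 ≤ c := by
      have : Real.pi ^ 2 ≤ 12 := by nlinarith [Real.pi_lt_d2]
      have : 1 / 12 ≤ (n : ℝ) / Real.pi ^ 2 :=
        div_le_div₀ (by positivity) hn' (by positivity) this
      linarith
    rw [div_le_iff₀ hc0, integral_add hHc.integrableOn_unitCell hGc.integrableOn_unitCell]
    rw [← setIntegral_lap_sq hφ hp] at hG ⊢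
    nlinarith
  change ∫ x in unitCell n, lap φ x * T x ≥ _
  rw [hsplit]
  rw [hbound] at hR
  have := mul_le_mul_of_nonneg_left hWle (div_nonneg hs0 zero_le_two)
  linarith
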